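/- For D = 24009857226825282345490, with N = 24548583881 the minimal absolute value of a negative norm in ℤ[√D], the smallest nonnegative integer a with a² ≡ D (mod N) is a = 4030160489, and the indecomposable element α_{7,6} satisfies N(α_{7,6}) = 977608342706 > (D − a²)/N = 977393040249; hence the Jang–Kim conjecture (that every totally positive indecomposable α ∈ ℤ[√D] satisfies N(α) ≤ (D−a²)/N) fails for this D. -/

import Mathlib

open Real

/-- One step of the continued fraction expansion of the square root of `D`. -/
lemma cf_step (D : ℕ) (s : ℤ) (hs0 : 0 ≤ s) (hs1 : s ^ 2 < (D : ℤ)) (hs2 : (D : ℤ) < (s + 1) ^ 2)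
    (u : ℤ → ℤ) (c : ℤ → ℝ)
    (hu : ∀ i : ℤ, 0 ≤ i → u i = ⌊c i⌋)
    (hcrec : ∀ i : ℤ, 0 ≤ i → c (i + 1) = 1 / (c i - u i))
    (i j : ℤ) (hi : 0 ≤ i) (hj : j = i + 1) (m d a m' d' : ℤ) (hd : 0 < d) (hd' : 0 < d')
    (h1 : a * d ≤ m + s) (h2 : m + s + 1 ≤ (a + 1) * d) (hm : m' = a * d - m)
    (hdd : d * d' = (D : ℤ) - m' ^ 2)
    (hc : c i = (√(D : ℝ) + m) / d) :
    u i = a ∧ c j = (√(D : ℝ) + m') / d' := by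
  subst hj
  have hsq : √(D : ℝ) ^ 2 = D := Real.sq_sqrt (by positivity)
  have hnn : 0 ≤ √(D : ℝ) := Real.sqrt_nonneg _
  have hs0' : (0 : ℝ) ≤ s := by exact_mod_cast hs0
  have hs1' : (s : ℝ) ^ 2 < D := by exact_mod_cast hs1
  have hs2' : (D : ℝ) < ((s : ℝ) + 1) ^ 2 := by exact_mod_cast hs2
  have l1 : (s : ℝ) < √(D : ℝ) := by nlinarith
  have l2 : √(D : ℝ) < s + 1 := by nlinarith
  have hdR : (0 : ℝ) < d := by exact_mod_cast hd
  have hdR' : (0 : ℝ) < d' := by exact_mod_cast hd'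
  have h1' : (a : ℝ) * d ≤ m + s := by exact_mod_cast h1
  have h2' : (m : ℝ) + s + 1 ≤ (a + 1) * d := by exact_mod_cast h2
  have hm' : (m' : ℝ) = a * d - m := by exact_mod_cast hm
  have hdd' : (d : ℝ) * d' = D - (m' : ℝ) ^ 2 := by exact_mod_cast hdd
  have hui : u i = a := by
    rw [hu i hi, hc, Int.floor_eq_iff]
    constructor
    · rw [le_div_iff₀ hdR]; linarith
    · rw [div_lt_iff₀ hdR]; linarith
  refine ⟨hui, ?_⟩
  rw [hcrec i hi, hui, hc]
  have hpos : 0 < √(D : ℝ) - m' := by rw [hm']; linarith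
  have e : (√(D : ℝ) + m) / d - a = (√(D : ℝ) - m') / d := by
    rw [hm']; field_simp; ring
  rw [e, one_div_div, div_eq_div_iff hpos.ne' hdR'.ne']
  linear_combination hdd' - hsq

/-- The values `≤ -M` of the indefinite form `A x² + 2 B x y + C y²`, for `0 < x ≤ K`, `0 ≤ y`. -/
def GoodForm (M A B C K : ℤ) : Prop :=
  ∀ x y : ℤ, 0 < x → x < K → 0 ≤ y → A * x ^ 2 + 2 * B * x * y + C * y ^ 2 < 0 →
    A * x ^ 2 + 2 * B * x * y + C * y ^ 2 ≤ -M

lemma GoodForm.step (M A B C K u v A' B' C' L : ℤ) (hM : 0 < M) (hA : A ≤ -M) (hC : 0 < C)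
    (hu : 0 < u) (hv : 0 < v)
    (hA' : A' = A + 2 * B * u + C * u ^ 2) (hA'M : A' ≤ -M)
    (hB' : B' = B + C * u + v * A') (hC' : C' = C + 2 * (B + C * u) * v + A' * v ^ 2)
    (hC'0 : 0 < C') (hKL : K ≤ L + 1) (hg : GoodForm M A' B' C' L) : GoodForm M A B C K := by
  intro x y hx hxK hy hf
  by_cases hyu : y ≤ u * x
  · -- convexity in `y`
    have hx2 : 1 ≤ x ^ 2 := by nlinarith
    have key : u * (A * x ^ 2 + 2 * B * x * y + C * y ^ 2) * x
        = x ^ 2 * (A * (u * x - y) + A' * y) - C * u * x * (y * (u * x - y)) := by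
      rw [hA']; ring
    have t1 : 0 ≤ C * u * x * (y * (u * x - y)) := by
      have := sub_nonneg.2 hyu
      positivity
    have t2 : A * (u * x - y) + A' * y ≤ -M * (u * x) := by nlinarith
    have t3 : x ^ 2 * (A * (u * x - y) + A' * y) ≤ -M * (u * x) := by
      have : 0 ≤ M * (u * x) := by positivity
      nlinarith
    have hux : 0 < u * x := by positivity
    have t4 : (u * x) * (A * x ^ 2 + 2 * B * x * y + C * y ^ 2) ≤ (u * x) * (-M) := by
      linarith
    exact le_of_mul_le_mul_left t4 hux
  · push Not at hyu
    obtain ⟨w, rfl⟩ : ∃ w, y = w + u * x := ⟨y - u * x, by ring⟩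
    have hw : 0 < w := by linarith
    by_cases hxv : x ≤ v * w
    · exfalso
      have key : v * w * (A * x ^ 2 + 2 * B * x * (w + u * x) + C * (w + u * x) ^ 2)
          = w ^ 2 * (C * (v * w - x) + C' * x) + (-A') * v * w * x * (v * w - x) := by
        rw [hC', hA']; ring
      have h0 := sub_nonneg.2 hxv
      have hA0 : 0 < -A' := by linarith
      have t1 : 0 ≤ w ^ 2 * (C * (v * w - x) + C' * x) := by positivity
      have t2 : 0 ≤ (-A') * v * w * x * (v * w - x) := by positivity
      have t3 : v * w * (A * x ^ 2 + 2 * B * x * (w + u * x) + C * (w + u * x) ^ 2) < 0 :=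
        mul_neg_of_pos_of_neg (by positivity) hf
      linarith
    · push Not at hxv
      have e : A * x ^ 2 + 2 * B * x * (w + u * x) + C * (w + u * x) ^ 2
          = A' * (x - v * w) ^ 2 + 2 * B' * (x - v * w) * w + C' * w ^ 2 := by
        rw [hC', hB', hA']; ring
      rw [e] at hf ⊢
      have : 0 < v * w := by positivity
      exact hg _ _ (by linarith) (by linarith) hw.le hf

lemma cast_ne_one (c : ℕ) (hc : c % 24548583881 ≠ 1) : (c : ZMod 24548583881) ≠ 1 := by
  intro h
  apply hc
  have := (ZMod.natCast_eq_natCast_iff' c 1 24548583881).1 (by rw [h]; norm_num)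
  rw [this]

lemma prime_M : Nat.Prime 24548583881 := by
  apply lucas_primality 24548583881 6
  · simp only [Nat.reduceSub]; reduce_mod_char
  · intro q hq hdvd
    have e : 24548583881 - 1 = 2 ^ 3 * 5 * 37 * 1033 * 16057 := by norm_num
    have hq' : q = 2 ∨ q = 5 ∨ q = 37 ∨ q = 1033 ∨ q = 16057 := by
      rw [e] at hdvd
      rcases hq.dvd_mul.1 hdvd with h | h
      · rcases hq.dvd_mul.1 h with h | h
        · rcases hq.dvd_mul.1 h with h | h
          · rcases hq.dvd_mul.1 h with h | h
            · left; exact (Nat.prime_dvd_prime_iff_eq hq Nat.prime_two).1 (hq.dvd_of_dvd_pow h)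
            · right; left; exact (Nat.prime_dvd_prime_iff_eq hq (by norm_num)).1 h
          · right; right; left; exact (Nat.prime_dvd_prime_iff_eq hq (by norm_num)).1 h
        · right; right; right; left; exact (Nat.prime_dvd_prime_iff_eq hq (by norm_num)).1 h
      · right; right; right; right; exact (Nat.prime_dvd_prime_iff_eq hq (by norm_num)).1 h
    rcases hq' with rfl | rfl | rfl | rfl | rfl <;> simp only [Nat.reduceSub, Nat.reduceDiv]
    · have h : (6 : ZMod 24548583881) ^ 12274291940 = ((24548583880 : ℕ) : ZMod 24548583881) := by
        push_cast; reduce_mod_char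
      rw [h]; exact cast_ne_one _ (by norm_num)
    · have h : (6 : ZMod 24548583881) ^ 4909716776 = ((13202545754 : ℕ) : ZMod 24548583881) := by
        push_cast; reduce_mod_char
      rw [h]; exact cast_ne_one _ (by norm_num)
    · have h : (6 : ZMod 24548583881) ^ 663475240 = ((23799776506 : ℕ) : ZMod 24548583881) := by
        push_cast; reduce_mod_char
      rw [h]; exact cast_ne_one _ (by norm_num)
    · have h : (6 : ZMod 24548583881) ^ 23764360 = ((3790721397 : ℕ) : ZMod 24548583881) := by
        push_cast; reduce_mod_char
      rw [h]; exact cast_ne_one _ (by norm_num)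
    · have h : (6 : ZMod 24548583881) ^ 1528840 = ((23525136395 : ℕ) : ZMod 24548583881) := by
        push_cast; reduce_mod_char
      rw [h]; exact cast_ne_one _ (by norm_num)

lemma goodForm_cycle (n : ℕ) : GoodForm 24548583881 (-29570169465) (-140750550005) 142005946401 n := by
  induction n with
  | zero => intro x y hx hK; push_cast at hK; omega
  | succ n ih =>
    refine GoodForm.step 24548583881 _ _ _ _ 2 12 (-24548583881) (-151321663775) 45282094665 (n+1)
      (by norm_num) (by norm_num) (by norm_num) (by norm_num) (by norm_num) (by norm_num)
      (by norm_num) (by norm_num) (by norm_num) (by norm_num) (by push_cast; linarith) ?_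
    refine GoodForm.step 24548583881 _ _ _ _ 6 1 (-210253141241) (-89882237026) 75770761854 (n+1)
      (by norm_num) (by norm_num) (by norm_num) (by norm_num) (by norm_num) (by norm_num)
      (by norm_num) (by norm_num) (by norm_num) (by norm_num) (by linarith) ?_
    refine GoodForm.step 24548583881 _ _ _ _ 3 4 (-67609706711) (-133008778308) 93455842766 (n+1)
      (by norm_num) (by norm_num) (by norm_num) (by norm_num) (by norm_num) (by norm_num)
      (by norm_num) (by norm_num) (by norm_num) (by norm_num) (by linarith) ?_
    refine GoodForm.step 24548583881 _ _ _ _ 3 12 (-24559791665) (-147358749990) 93455842766 (n+1)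
      (by norm_num) (by norm_num) (by norm_num) (by norm_num) (by norm_num) (by norm_num)
      (by norm_num) (by norm_num) (by norm_num) (by norm_num) (by linarith) ?_
    refine GoodForm.step 24548583881 _ _ _ _ 3 4 (-67609706711) (-137430048536) 75770761854 (n+1)
      (by norm_num) (by norm_num) (by norm_num) (by norm_num) (by norm_num) (by norm_num)
      (by norm_num) (by norm_num) (by norm_num) (by norm_num) (by linarith) ?_
    refine GoodForm.step 24548583881 _ _ _ _ 3 1 (-210253141241) (-120370904215) 45282094665 (n+1)
      (by norm_num) (by norm_num) (by norm_num) (by norm_num) (by norm_num) (by norm_num)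
      (by norm_num) (by norm_num) (by norm_num) (by norm_num) (by linarith) ?_
    refine GoodForm.step 24548583881 _ _ _ _ 6 12 (-24548583881) (-143261342797) 142005946401 (n+1)
      (by norm_num) (by norm_num) (by norm_num) (by norm_num) (by norm_num) (by norm_num)
      (by norm_num) (by norm_num) (by norm_num) (by norm_num) (by linarith) ?_
    refine GoodForm.step 24548583881 _ _ _ _ 2 10 (-29570169465) (-154951144645) 1 (n+1)
      (by norm_num) (by norm_num) (by norm_num) (by norm_num) (by norm_num) (by norm_num)
      (by norm_num) (by norm_num) (by norm_num) (by norm_num) (by linarith) ?_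
    refine GoodForm.step 24548583881 _ _ _ _ 309902289290 10 (-29570169465) (-140750550005) 142005946401 n
      (by norm_num) (by norm_num) (by norm_num) (by norm_num) (by norm_num) (by norm_num)
      (by norm_num) (by norm_num) (by norm_num) (by norm_num) (by linarith) ih

lemma goodForm_main (n : ℕ) : GoodForm 24548583881 (-24009857226825282345490) (0) 1 n := by
  refine GoodForm.step 24548583881 _ _ _ _ 154951144645 10 (-29570169465) (-140750550005) 142005946401 n
    (by norm_num) (by norm_num) (by norm_num) (by norm_num) (by norm_num) (by norm_num)
    (by norm_num) (by norm_num) (by norm_num) (by norm_num) (by linarith) (goodForm_cycle n)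

lemma neg_norm_le (a b : ℤ) (h : a ^ 2 - 24009857226825282345490 * b ^ 2 < 0) :
    a ^ 2 - 24009857226825282345490 * b ^ 2 ≤ -24548583881 := by
  have hb : 0 < |b| := by
    rw [abs_pos]; rintro rfl; nlinarith [sq_nonneg a]
  have hk : |b| < ((|b| + 1).toNat : ℤ) := by
    rw [Int.toNat_of_nonneg (by linarith)]; linarith
  have := goodForm_main (|b| + 1).toNat |b| |a| hb hk (abs_nonneg a)
  simp only [sq_abs] at this
  have h2 := this (by linarith)
  linarith

theorem stmt19 (D : ℕ) (hDsf : Squarefree D) (hD4 : D % 4 = 2 ∨ D % 4 = 3)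
    (u : ℤ → ℤ) (c : ℤ → ℝ)
    (hc0 : c 0 = Real.sqrt D)
    (hu : ∀ i : ℤ, 0 ≤ i → u i = ⌊c i⌋)
    (hcrec : ∀ i : ℤ, 0 ≤ i → c (i + 1) = 1 / (c i - u i))
    (p q : ℤ → ℤ)
    (hpm : p (-1) = 1) (hqm : q (-1) = 0)
    (hp0 : p 0 = u 0) (hq0 : q 0 = 1)
    (hprec : ∀ i : ℤ, 0 ≤ i → p (i + 1) = u (i + 1) * p i + p (i - 1))
    (hqrec : ∀ i : ℤ, 0 ≤ i → q (i + 1) = u (i + 1) * q i + q (i - 1))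
    (hD : D = 24009857226825282345490)
    (N : ℕ)
    (hN : IsLeast {n : ℕ | 0 < n ∧ ∃ a b : ℤ, a ^ 2 - (D : ℤ) * b ^ 2 = -(n : ℤ)} N) :
    N = 24548583881 ∧
    IsLeast {a : ℕ | (a : ℤ) ^ 2 ≡ (D : ℤ) [ZMOD (N : ℤ)]} 4030160489 ∧
    (p 7 + 6 * p 8) ^ 2 - (D : ℤ) * (q 7 + 6 * q 8) ^ 2 = 977608342706 ∧
    (N : ℤ) * 977393040249 = (D : ℤ) - 4030160489 ^ 2 ∧
    ∃ x y : ℤ,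
      (0 < (x : ℝ) + y * Real.sqrt D ∧ 0 < (x : ℝ) - y * Real.sqrt D) ∧
      (¬ ∃ a b a' b' : ℤ,
        (0 < (a : ℝ) + b * Real.sqrt D ∧ 0 < (a : ℝ) - b * Real.sqrt D) ∧
        (0 < (a' : ℝ) + b' * Real.sqrt D ∧ 0 < (a' : ℝ) - b' * Real.sqrt D) ∧
        x = a + a' ∧ y = b + b') ∧
      ((x : ℝ) ^ 2 - (D : ℝ) * (y : ℝ) ^ 2 > ((D : ℝ) - 4030160489 ^ 2) / (N : ℝ)) := by
  have hcast : ((D : ℕ) : ℤ) = 24009857226825282345490 := by rw [hD]; norm_num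
  have hcastR : ((D : ℕ) : ℝ) = 24009857226825282345490 := by rw [hD]; norm_num
  have hNval : N = 24548583881 := by
    apply le_antisymm
    · apply hN.2
      refine ⟨by norm_num, 3253974037547, 21, ?_⟩
      rw [hcast]; norm_num
    · obtain ⟨hpos, a, b, hab⟩ := hN.1
      rw [hcast] at hab
      have := neg_norm_le a b (by rw [hab]; simpa using hpos)
      rw [hab] at this
      omega
  have S := cf_step D 154951144645 (by norm_num) (by rw [hcast]; norm_num) (by rw [hcast]; norm_num)
    u c hu hcrec
  have k0 : c 0 = (√(D : ℝ) + (0 : ℤ)) / (1 : ℤ) := by rw [hc0]; simp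
  obtain ⟨u0, k1⟩ := S 0 1 (by norm_num) (by norm_num) 0 1 154951144645 154951144645 29570169465
    (by norm_num) (by norm_num) (by norm_num) (by norm_num) (by norm_num)
    (by rw [hcast]; norm_num) k0
  obtain ⟨u1, k2⟩ := S 1 2 (by norm_num) (by norm_num) 154951144645 29570169465 10 140750550005 142005946401
    (by norm_num) (by norm_num) (by norm_num) (by norm_num) (by norm_num)
    (by rw [hcast]; norm_num) k1
  obtain ⟨u2, k3⟩ := S 2 3 (by norm_num) (by norm_num) 140750550005 142005946401 2 143261342797 24548583881
    (by norm_num) (by norm_num) (by norm_num) (by norm_num) (by norm_num)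
    (by rw [hcast]; norm_num) k2
  obtain ⟨u3, k4⟩ := S 3 4 (by norm_num) (by norm_num) 143261342797 24548583881 12 151321663775 45282094665
    (by norm_num) (by norm_num) (by norm_num) (by norm_num) (by norm_num)
    (by rw [hcast]; norm_num) k3
  obtain ⟨u4, k5⟩ := S 4 5 (by norm_num) (by norm_num) 151321663775 45282094665 6 120370904215 210253141241
    (by norm_num) (by norm_num) (by norm_num) (by norm_num) (by norm_num)
    (by rw [hcast]; norm_num) k4
  obtain ⟨u5, k6⟩ := S 5 6 (by norm_num) (by norm_num) 120370904215 210253141241 1 89882237026 75770761854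
    (by norm_num) (by norm_num) (by norm_num) (by norm_num) (by norm_num)
    (by rw [hcast]; norm_num) k5
  obtain ⟨u6, k7⟩ := S 6 7 (by norm_num) (by norm_num) 89882237026 75770761854 3 137430048536 67609706711
    (by norm_num) (by norm_num) (by norm_num) (by norm_num) (by norm_num)
    (by rw [hcast]; norm_num) k6
  obtain ⟨u7, k8⟩ := S 7 8 (by norm_num) (by norm_num) 137430048536 67609706711 4 133008778308 93455842766
    (by norm_num) (by norm_num) (by norm_num) (by norm_num) (by norm_num)
    (by rw [hcast]; norm_num) k7
  obtain ⟨u8, k9⟩ := S 8 9 (by norm_num) (by norm_num) 133008778308 93455842766 3 147358749990 24559791665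
    (by norm_num) (by norm_num) (by norm_num) (by norm_num) (by norm_num)
    (by rw [hcast]; norm_num) k8
  rw [u0] at hp0
  have p1 : p 1 = 1549511446451 := by
    have := hprec 0 (by norm_num)
    norm_num [u1, hp0, hpm] at this
    exact this
  have q1 : q 1 = 10 := by
    have := hqrec 0 (by norm_num)
    norm_num [u1, hq0, hqm] at this
    exact this
  have p2 : p 2 = 3253974037547 := by
    have := hprec 1 (by norm_num)
    norm_num [u2, p1, hp0] at this
    exact this
  have q2 : q 2 = 21 := by
    have := hqrec 1 (by norm_num)
    norm_num [u2, q1, hq0] at this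
    exact this
  have p3 : p 3 = 40597199897015 := by
    have := hprec 2 (by norm_num)
    norm_num [u3, p2, p1] at this
    exact this
  have q3 : q 3 = 262 := by
    have := hqrec 2 (by norm_num)
    norm_num [u3, q2, q1] at this
    exact this
  have p4 : p 4 = 246837173419637 := by
    have := hprec 3 (by norm_num)
    norm_num [u4, p3, p2] at this
    exact this
  have q4 : q 4 = 1593 := by
    have := hqrec 3 (by norm_num)
    norm_num [u4, q3, q2] at this
    exact this
  have p5 : p 5 = 287434373316652 := by
    have := hprec 4 (by norm_num)
    norm_num [u5, p4, p3] at this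
    exact this
  have q5 : q 5 = 1855 := by
    have := hqrec 4 (by norm_num)
    norm_num [u5, q4, q3] at this
    exact this
  have p6 : p 6 = 1109140293369593 := by
    have := hprec 5 (by norm_num)
    norm_num [u6, p5, p4] at this
    exact this
  have q6 : q 6 = 7158 := by
    have := hqrec 5 (by norm_num)
    norm_num [u6, q5, q4] at this
    exact this
  have p7 : p 7 = 4723995546795024 := by
    have := hprec 6 (by norm_num)
    norm_num [u7, p6, p5] at this
    exact this
  have q7 : q 7 = 30487 := by
    have := hqrec 6 (by norm_num)
    norm_num [u7, q6, q5] at this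
    exact this
  have p8 : p 8 = 15281126933754665 := by
    have := hprec 7 (by norm_num)
    norm_num [u8, p7, p6] at this
    exact this
  have q8 : q 8 = 98619 := by
    have := hqrec 7 (by norm_num)
    norm_num [u8, q7, q6] at this
    exact this
  refine ⟨hNval, ⟨?_, ?_⟩, ?_, ?_, 96410757149323014, 622201, ?_, ?_, ?_⟩
  · change ((4030160489 : ℕ) : ℤ) ^ 2 ≡ (D : ℤ) [ZMOD (N : ℤ)]
    rw [hcast, hNval]
    decide
  · intro b hb
    change (b : ℤ) ^ 2 ≡ (D : ℤ) [ZMOD (N : ℤ)] at hb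
    rw [hcast, hNval] at hb
    by_contra hlt
    push Not at hlt
    have h1 : ((24548583881 : ℕ) : ℤ) ∣ ((4030160489 : ℤ) - b) * (4030160489 + b) := by
      have h2 : ((24548583881 : ℕ) : ℤ) ∣ (4030160489 : ℤ) ^ 2 - 24009857226825282345490 := by norm_num
      have h3 := dvd_add hb.dvd h2
      have e : (24009857226825282345490 - (b : ℤ) ^ 2) + ((4030160489 : ℤ) ^ 2 - 24009857226825282345490)
        = ((4030160489 : ℤ) - b) * (4030160489 + b) := by ring
      rwa [e] at h3
    rcases (Nat.prime_iff_prime_int.1 prime_M).dvd_or_dvd h1 with h | h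
    · have := Int.le_of_dvd (by omega) h
      omega
    · have := Int.le_of_dvd (by omega) h
      omega
  · rw [p7, p8, q7, q8, hcast]; norm_num
  · rw [hNval, hcast]; norm_num
  · have hnn : 0 ≤ √(D : ℝ) := Real.sqrt_nonneg _
    have hlt : √(D : ℝ) < 96410757149323014 / 622201 := by
      rw [Real.sqrt_lt' (by norm_num), hcastR]; norm_num
    rw [lt_div_iff₀ (by norm_num)] at hlt
    push_cast
    constructor <;> linarith
  · rintro ⟨a, b, a', b', ⟨h1, h2⟩, ⟨h3, h4⟩, hx, hy⟩
    have hlt : (15281126933754665 / 98619 : ℝ) < √(D : ℝ) := by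
      apply Real.lt_sqrt_of_sq_lt
      rw [hcastR]; norm_num
    rw [div_lt_iff₀ (by norm_num)] at hlt
    have key : ∀ a b : ℤ, 0 < (a : ℝ) + b * √(D : ℝ) → 0 < (a : ℝ) - b * √(D : ℝ) →
        1 ≤ 98619 * a - 15281126933754665 * b := by
      intro a b h1 h2
      have : (0 : ℝ) < 98619 * a - 15281126933754665 * b := by
        rcases le_total 0 (b : ℝ) with hb | hb <;> nlinarith
      have h : (0 : ℤ) < 98619 * a - 15281126933754665 * b := by exact_mod_cast this
      omega
    have r1 := key a b h1 h2
    have r2 := key a' b' h3 h4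
    omega
  · rw [hNval, hcastR]; norm_num
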